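/- (Theorem 4, extended Katznelson–Tzafriri theorem) Let T : X → X be a bounded linear operator on a complex Banach space X which is power bounded, i.e. sup_{n ≥ 1} ‖T^n‖ < ∞, and let ϑ ∈ ℂ with |ϑ| = 1. If σ(T) ∩ ∂D ⊆ {ϑ}, then lim_{n→∞} ‖T^{n+1} − ϑ T^n‖ = 0 in the operator norm. -/

import Mathlib

open Filter Topology

/-!
Rotating, let `ϑ = 1`. For functionals `f n` norming `a ^ (n + 1) - a ^ n`, the weak-star limits of
`x ↦ f n (x * a ^ (n + m))` along an ultrafilter exist for every integer `m`, hence form a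
*bilateral* bounded sequence of functionals `φ m`, and `a` moves it one step ahead. On the Banach
space of all such trajectories of an operator, that operator acts as the shift, an invertible
isometry. Its spectrum therefore lies on the unit circle, and so in `{1}`. By Gelfand's theorem the
shift is the identity: all these trajectories are constant, and the norms in question tend to
`‖φ 1 1 - φ 0 1‖ = 0`.

Gelfand's theorem comes from Liouville's theorem. If `u` has spectrum `{1}`, then
`(1 + z) + (1 - z) u` is invertible for every `z`. By the Neumann series for `u` (right half plane)
and for `u⁻¹` (left half plane), the norm of its inverse is `O((1 + ‖z‖) / |Re z|)`, and the maximum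
modulus principle turns this into boundedness. The values `1 / 2` at `z = 1` and `(2 u)⁻¹` at
`z = -1` must then agree.
-/

open scoped BoundedContinuousFunction Ring

section PowerBounded

variable {𝕜 A : Type*} [NormedField 𝕜] [NormedRing A] [NormedAlgebra 𝕜 A]
  {a : A} {C : ℝ} {ζ : 𝕜}

theorem norm_smul_pow_le (ha : ∀ n : ℕ, ‖a ^ n‖ ≤ C) (ζ : 𝕜) (n : ℕ) :
    ‖(ζ • a) ^ n‖ ≤ C * ‖ζ‖ ^ n := by
  rw [smul_pow, norm_smul, norm_pow, mul_comm]
  gcongr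
  exact ha n

theorem norm_units_pow_le {u : Aˣ} (hu : ∀ n : ℤ, ‖((u ^ n : Aˣ) : A)‖ ≤ C) (n : ℕ) :
    ‖(u : A) ^ n‖ ≤ C := by
  exact_mod_cast hu n

theorem norm_units_inv_pow_le {u : Aˣ} (hu : ∀ n : ℤ, ‖((u ^ n : Aˣ) : A)‖ ≤ C) (n : ℕ) :
    ‖((u⁻¹ : Aˣ) : A) ^ n‖ ≤ C :=
  norm_units_pow_le (fun k ↦ by simpa only [inv_zpow'] using hu (-k)) n

variable [CompleteSpace A]

theorem summable_smul_pow (ha : ∀ n : ℕ, ‖a ^ n‖ ≤ C) (hζ : ‖ζ‖ < 1) :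
    Summable fun n : ℕ ↦ (ζ • a) ^ n :=
  .of_norm_bounded ((summable_geometric_of_lt_one (norm_nonneg ζ) hζ).mul_left C)
    (norm_smul_pow_le ha ζ)

theorem isUnit_one_sub_smul (ha : ∀ n : ℕ, ‖a ^ n‖ ≤ C) (hζ : ‖ζ‖ < 1) : IsUnit (1 - ζ • a) :=
  have hsum := summable_smul_pow ha hζ
  ⟨⟨_, _, hsum.one_sub_mul_tsum_pow, hsum.tsum_pow_mul_one_sub⟩, rfl⟩

theorem inverse_one_sub_smul_eq_tsum (ha : ∀ n : ℕ, ‖a ^ n‖ ≤ C) (hζ : ‖ζ‖ < 1) :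
    (1 - ζ • a)⁻¹ʳ = ∑' n : ℕ, (ζ • a) ^ n := by
  rw [← mul_one (1 - ζ • a)⁻¹ʳ, Ring.inverse_mul_eq_iff_eq_mul _ _ _ (isUnit_one_sub_smul ha hζ),
    (summable_smul_pow ha hζ).one_sub_mul_tsum_pow]

theorem norm_inverse_one_sub_smul_le (ha : ∀ n : ℕ, ‖a ^ n‖ ≤ C) (hζ : ‖ζ‖ < 1) :
    ‖(1 - ζ • a)⁻¹ʳ‖ ≤ C / (1 - ‖ζ‖) := by
  rw [inverse_one_sub_smul_eq_tsum ha hζ, div_eq_mul_inv]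
  exact tsum_of_norm_bounded ((hasSum_geometric_of_lt_one (norm_nonneg ζ) hζ).mul_left C)
    (norm_smul_pow_le ha ζ)

theorem norm_le_one_of_mem_spectrum (ha : ∀ n : ℕ, ‖a ^ n‖ ≤ C) (hζ : ζ ∈ spectrum 𝕜 a) :
    ‖ζ‖ ≤ 1 := by
  by_contra! h
  have hζ0 : ζ ≠ 0 := norm_pos_iff.1 (one_pos.trans h)
  have hunit : IsUnit (1 - ζ⁻¹ • a) :=
    isUnit_one_sub_smul ha (by rw [norm_inv]; exact inv_lt_one_of_one_lt₀ h)
  have hfactor : algebraMap 𝕜 A ζ - a = Units.mk0 ζ hζ0 • (1 - ζ⁻¹ • a) := by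
    rw [Units.smul_mk0, smul_sub, smul_inv_smul₀ hζ0, Algebra.algebraMap_eq_smul_one]
  refine hζ (?_ : IsUnit (algebraMap 𝕜 A ζ - a))
  exact hfactor ▸ hunit.smul _

theorem norm_eq_one_of_mem_spectrum_units {u : Aˣ} (hu : ∀ n : ℤ, ‖((u ^ n : Aˣ) : A)‖ ≤ C)
    (hζ : ζ ∈ spectrum 𝕜 (u : A)) : ‖ζ‖ = 1 := by
  have hζ0 : ζ ≠ 0 := spectrum.ne_zero_of_mem_of_unit hζ
  have hle : ‖ζ‖ ≤ 1 := norm_le_one_of_mem_spectrum (norm_units_pow_le hu) hζ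
  have hinv : ‖ζ⁻¹‖ ≤ 1 := norm_le_one_of_mem_spectrum (norm_units_inv_pow_le hu)
    ((spectrum.inv_mem_iff (r := Units.mk0 ζ hζ0)).1 hζ)
  rw [norm_inv] at hinv
  exact hle.antisymm ((inv_le_one₀ (norm_pos_iff.2 hζ0)).1 hinv)

end PowerBounded

section Liouville

variable {F : Type*} [NormedAddCommGroup F] [NormedSpace ℂ F] {f : ℂ → F} {K : ℝ}

theorem norm_sq_add_sq_eq_of_norm_eq {z : ℂ} {R : ℝ} (hz : ‖z‖ = R) :
    ‖z ^ 2 + (R : ℂ) ^ 2‖ = 2 * |z.re| * R := by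
  have hfactor : z ^ 2 + (R : ℂ) ^ 2 = ((2 * z.re : ℝ) : ℂ) * z := by
    rw [← hz, ← Complex.mul_conj', ← Complex.add_conj]
    ring
  rw [hfactor, norm_mul, Complex.norm_real, hz, Real.norm_eq_abs, abs_mul, abs_two]

/- On the circle `‖z‖ = R` the factor `z ^ 2 + R ^ 2` vanishes exactly at the two points where
the bound on `f` is void. -/
theorem norm_sq_add_sq_smul_le (hf : Differentiable ℂ f)
    (hK : ∀ z, |z.re| * ‖f z‖ ≤ K * (1 + ‖z‖)) {R : ℝ} (hR : 0 < R) {w : ℂ} (hw : ‖w‖ ≤ R) :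
    ‖(w ^ 2 + (R : ℂ) ^ 2) • f w‖ ≤ 2 * R * (K * (1 + R)) := by
  refine Complex.norm_le_of_forall_mem_frontier_norm_le (U := Metric.ball (0 : ℂ) R)
    (f := fun z ↦ (z ^ 2 + (R : ℂ) ^ 2) • f z) Metric.isBounded_ball
    (Differentiable.diffContOnCl (by fun_prop)) (fun z hz ↦ ?_) ?_
  · rw [frontier_ball _ hR.ne', mem_sphere_zero_iff_norm] at hz
    calc ‖(z ^ 2 + (R : ℂ) ^ 2) • f z‖ = 2 * R * (|z.re| * ‖f z‖) := by
          rw [norm_smul, norm_sq_add_sq_eq_of_norm_eq hz]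
          ring
      _ ≤ 2 * R * (K * (1 + R)) := by
          refine mul_le_mul_of_nonneg_left ?_ (by positivity)
          rw [← hz]
          exact hK z
  · rwa [closure_ball _ hR.ne', mem_closedBall_zero_iff]

theorem apply_eq_apply_of_abs_re_mul_norm_le (hf : Differentiable ℂ f)
    (hK : ∀ z, |z.re| * ‖f z‖ ≤ K * (1 + ‖z‖)) (z w : ℂ) : f z = f w := by
  have hbound : ∀ w, ‖f w‖ ≤ 6 * K := by
    intro w
    set R : ℝ := 1 + 2 * ‖w‖
    have hw : 0 ≤ ‖w‖ := norm_nonneg w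
    have hmax := norm_sq_add_sq_smul_le hf hK (R := R) (by positivity) (by linarith)
    have hlow : R ^ 2 - ‖w‖ ^ 2 ≤ ‖w ^ 2 + (R : ℂ) ^ 2‖ := by
      have := norm_sub_le_norm_add ((R : ℂ) ^ 2) (w ^ 2)
      rwa [norm_pow, norm_pow, Complex.norm_real, Real.norm_eq_abs, sq_abs, add_comm] at this
    have hK0 : 0 ≤ K := by simpa using hK 0
    rw [norm_smul] at hmax
    have hquad : (R ^ 2 - ‖w‖ ^ 2) * ‖f w‖ ≤ (R ^ 2 - ‖w‖ ^ 2) * (6 * K) :=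
      calc (R ^ 2 - ‖w‖ ^ 2) * ‖f w‖ ≤ 2 * R * (K * (1 + R)) := by
            refine le_trans ?_ hmax
            gcongr
        _ = K * (2 * R * (1 + R)) := by ring
        _ ≤ K * (6 * (R ^ 2 - ‖w‖ ^ 2)) := by
            refine mul_le_mul_of_nonneg_left ?_ hK0
            nlinarith
        _ = (R ^ 2 - ‖w‖ ^ 2) * (6 * K) := by ring
    exact le_of_mul_le_mul_left hquad (by nlinarith)
  refine hf.apply_eq_apply_of_bounded (isBounded_iff_forall_norm_le.2 ⟨6 * K, ?_⟩) z w
  rintro _ ⟨w, rfl⟩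
  exact hbound w

end Liouville

section Gelfand

variable {A : Type*} [NormedRing A] [NormedAlgebra ℂ A] {a : A} {C : ℝ} {z : ℂ}

/-- The linear pencil `(1 + z) + (1 - z) a`. Up to the factor `z - 1` it is `λ - a` at the Cayley
transform `λ = (z + 1) / (z - 1)`, which maps the imaginary axis to the unit circle and is never
equal to `1`. -/
def cayleyPencil (a : A) (z : ℂ) : A := (1 + z) • 1 + (1 - z) • a

theorem isUnit_cayleyPencil (ha : spectrum ℂ a ⊆ {1}) (z : ℂ) : IsUnit (cayleyPencil a z) := by
  rcases eq_or_ne z 1 with rfl | hz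
  · simpa [cayleyPencil] using (isUnit_one (M := A)).smul (Units.mk0 (1 + 1 : ℂ) (by norm_num))
  · have hz' : z - 1 ≠ 0 := sub_ne_zero.2 hz
    have hunit : IsUnit (algebraMap ℂ A ((1 + z) / (z - 1)) - a) := by
      by_contra hmem
      have hone : (1 + z) / (z - 1) = 1 := ha hmem
      rw [div_eq_one_iff_eq hz'] at hone
      have : (2 : ℂ) = 0 := by linear_combination hone
      norm_num at this
    have hfactor : cayleyPencil a z
        = Units.mk0 (z - 1) hz' • (algebraMap ℂ A ((1 + z) / (z - 1)) - a) := by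
      rw [Units.smul_mk0, smul_sub, Algebra.algebraMap_eq_smul_one, smul_smul,
        mul_div_cancel₀ _ hz', cayleyPencil]
      module
    exact hfactor ▸ hunit.smul _

theorem cayleyPencil_units (u : Aˣ) (z : ℂ) :
    cayleyPencil (u : A) z = u * cayleyPencil ((u⁻¹ : Aˣ) : A) (-z) := by
  simp only [cayleyPencil, mul_add, mul_smul_comm, mul_one, Units.mul_inv, sub_neg_eq_add,
    ← sub_eq_add_neg]
  abel

theorem norm_one_sub_lt_norm_one_add (hz : 0 < z.re) : ‖1 - z‖ < ‖1 + z‖ := by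
  rw [← sq_lt_sq₀ (norm_nonneg _) (norm_nonneg _), Complex.sq_norm, Complex.sq_norm,
    Complex.normSq_add, Complex.normSq_sub]
  simp only [map_one, one_mul, Complex.conj_re]
  linarith

theorem four_mul_re_eq (z : ℂ) :
    4 * z.re = (‖1 + z‖ - ‖1 - z‖) * (‖1 + z‖ + ‖1 - z‖) := by
  rw [mul_comm (_ - _), ← sq_sub_sq, Complex.sq_norm, Complex.sq_norm,
    Complex.normSq_add, Complex.normSq_sub]
  simp only [map_one, one_mul, Complex.conj_re, add_sub_sub_cancel]
  ring

variable [CompleteSpace A]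

theorem norm_sub_norm_mul_norm_inverse_cayleyPencil_le (ha : ∀ n : ℕ, ‖a ^ n‖ ≤ C)
    (hz : 0 < z.re) : (‖1 + z‖ - ‖1 - z‖) * ‖(cayleyPencil a z)⁻¹ʳ‖ ≤ C := by
  have hlt : ‖1 - z‖ < ‖1 + z‖ := norm_one_sub_lt_norm_one_add hz
  have hpos : 0 < ‖1 + z‖ := (norm_nonneg _).trans_lt hlt
  have h0 : 1 + z ≠ 0 := norm_pos_iff.1 hpos
  set ζ : ℂ := -((1 - z) / (1 + z)) with hζdef
  have hζ : ‖ζ‖ = ‖1 - z‖ / ‖1 + z‖ := by rw [hζdef, norm_neg, norm_div]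
  have hζ1 : ‖ζ‖ < 1 := by rwa [hζ, div_lt_one hpos]
  have hfactor : cayleyPencil a z = (1 + z) • (1 - ζ • a) := by
    rw [smul_sub, smul_smul, hζdef, mul_neg, mul_div_cancel₀ _ h0,
      cayleyPencil, neg_smul, sub_neg_eq_add]
  have hunit : IsUnit (1 - ζ • a) := isUnit_one_sub_smul ha hζ1
  have hP : IsUnit (cayleyPencil a z) := by
    rw [hfactor]; exact hunit.smul (Units.mk0 _ h0)
  have hinv : (1 + z) • (cayleyPencil a z)⁻¹ʳ = (1 - ζ • a)⁻¹ʳ := by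
    rw [eq_comm, ← mul_one (1 - ζ • a)⁻¹ʳ, Ring.inverse_mul_eq_iff_eq_mul _ _ _ hunit,
      mul_smul_comm, ← smul_mul_assoc, ← hfactor, Ring.mul_inverse_cancel _ hP]
  have hbound := norm_inverse_one_sub_smul_le ha hζ1
  rw [← hinv, norm_smul, le_div_iff₀ (sub_pos.2 hζ1), hζ] at hbound
  calc (‖1 + z‖ - ‖1 - z‖) * ‖(cayleyPencil a z)⁻¹ʳ‖
      = ‖1 + z‖ * ‖(cayleyPencil a z)⁻¹ʳ‖ * (1 - ‖1 - z‖ / ‖1 + z‖) := by field_simp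
    _ ≤ C := hbound

theorem re_mul_norm_inverse_cayleyPencil_le (ha : ∀ n : ℕ, ‖a ^ n‖ ≤ C) (hz : 0 < z.re) :
    z.re * ‖(cayleyPencil a z)⁻¹ʳ‖ ≤ C * (1 + ‖z‖) := by
  have hC : 0 ≤ C := (norm_nonneg _).trans (ha 0)
  have hadd : ‖1 + z‖ ≤ 1 + ‖z‖ := by simpa using norm_add_le 1 z
  have hsub : ‖1 - z‖ ≤ 1 + ‖z‖ := by simpa using norm_sub_le 1 z
  have hbound := norm_sub_norm_mul_norm_inverse_cayleyPencil_le ha hz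
  have : 4 * (z.re * ‖(cayleyPencil a z)⁻¹ʳ‖) ≤ C * (2 * (1 + ‖z‖)) :=
    calc 4 * (z.re * ‖(cayleyPencil a z)⁻¹ʳ‖)
        = (‖1 + z‖ - ‖1 - z‖) * ‖(cayleyPencil a z)⁻¹ʳ‖ * (‖1 + z‖ + ‖1 - z‖) := by
          rw [← mul_assoc, four_mul_re_eq]
          ring
      _ ≤ C * (2 * (1 + ‖z‖)) := by
          gcongr
          linarith
  nlinarith [norm_nonneg z]

variable {u : Aˣ}

theorem abs_re_mul_norm_inverse_cayleyPencil_units_le (hu : ∀ n : ℤ, ‖((u ^ n : Aˣ) : A)‖ ≤ C)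
    (z : ℂ) : |z.re| * ‖(cayleyPencil (u : A) z)⁻¹ʳ‖ ≤ C * (1 + C) * (1 + ‖z‖) := by
  have hC : 0 ≤ C := (norm_nonneg _).trans (hu 0)
  rcases lt_trichotomy z.re 0 with hz | hz | hz
  · rw [cayleyPencil_units, Ring.inverse_mul (.inl u.isUnit), Ring.inverse_unit, abs_of_neg hz]
    have hneg := re_mul_norm_inverse_cayleyPencil_le (z := -z)
      (norm_units_inv_pow_le hu) (by simpa using hz)
    rw [Complex.neg_re, norm_neg] at hneg
    have hinv : ‖((u⁻¹ : Aˣ) : A)‖ ≤ 1 + C := by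
      simpa using (norm_units_inv_pow_le hu 1).trans (by linarith : C ≤ 1 + C)
    calc -z.re * ‖(cayleyPencil ((u⁻¹ : Aˣ) : A) (-z))⁻¹ʳ * ((u⁻¹ : Aˣ) : A)‖
        ≤ -z.re * (‖(cayleyPencil ((u⁻¹ : Aˣ) : A) (-z))⁻¹ʳ‖ * ‖((u⁻¹ : Aˣ) : A)‖) :=
          mul_le_mul_of_nonneg_left (norm_mul_le _ _) (by linarith)
      _ = -z.re * ‖(cayleyPencil ((u⁻¹ : Aˣ) : A) (-z))⁻¹ʳ‖ * ‖((u⁻¹ : Aˣ) : A)‖ := by ring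
      _ ≤ C * (1 + ‖z‖) * (1 + C) := by gcongr
      _ = C * (1 + C) * (1 + ‖z‖) := by ring
  · rw [hz, abs_zero, zero_mul]
    positivity
  · rw [abs_of_pos hz]
    refine (re_mul_norm_inverse_cayleyPencil_le (norm_units_pow_le hu) hz).trans ?_
    gcongr
    nlinarith

theorem units_eq_one_of_norm_zpow_le (hu : ∀ n : ℤ, ‖((u ^ n : Aˣ) : A)‖ ≤ C)
    (hspec : spectrum ℂ (u : A) ⊆ {1}) : u = 1 := by
  have hunit := isUnit_cayleyPencil hspec
  have hdiff : Differentiable ℂ fun z ↦ (cayleyPencil (u : A) z)⁻¹ʳ := by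
    have hpencil : Differentiable ℂ (cayleyPencil (u : A)) := by
      unfold cayleyPencil
      fun_prop
    exact fun z ↦ (differentiableAt_inverse (𝕜 := ℂ) (hunit z)).comp z (hpencil z)
  have hconst : (cayleyPencil (u : A) 1)⁻¹ʳ = (cayleyPencil (u : A) (-1))⁻¹ʳ :=
    apply_eq_apply_of_abs_re_mul_norm_le hdiff
      (abs_re_mul_norm_inverse_cayleyPencil_units_le hu) 1 (-1)
  have hends : cayleyPencil (u : A) 1 = cayleyPencil (u : A) (-1) := by
    rw [← Ring.inverse_inverse (hunit 1), hconst, Ring.inverse_inverse (hunit (-1))]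
  simp only [cayleyPencil, sub_self, zero_smul, add_zero, add_neg_cancel, zero_add,
    sub_neg_eq_add] at hends
  exact (Units.ext (smul_right_injective A (by norm_num : (1 + 1 : ℂ) ≠ 0) hends)).symm

theorem map_ofAdd_one_eq_one_of_norm_le {ρ : Multiplicative ℤ →* A} (hρ : ∀ k, ‖ρ k‖ ≤ C)
    (hspec : spectrum ℂ (ρ (.ofAdd 1)) ∩ {r | ‖r‖ = 1} ⊆ {1}) : ρ (.ofAdd 1) = 1 := by
  have hzpow (n : ℤ) : ‖((ρ.toHomUnits (.ofAdd 1) ^ n : Aˣ) : A)‖ ≤ C := by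
    rw [← map_zpow]
    exact hρ _
  exact congrArg Units.val (units_eq_one_of_norm_zpow_le hzpow fun r hr ↦
    hspec ⟨hr, norm_eq_one_of_mem_spectrum_units hzpow hr⟩)

end Gelfand

section BoundedTrajectories

variable {𝕜 X : Type*} [NontriviallyNormedField 𝕜] [NormedAddCommGroup X] [NormedSpace 𝕜 X]

/-- The bounded complete trajectories of the discrete dynamical system generated by `T`, as a
subspace of the bounded bilateral sequences with the supremum norm. -/
def boundedTrajectories (T : X →L[𝕜] X) : Submodule 𝕜 (ℤ →ᵇ X) where
  carrier := {x | ∀ m, x (m + 1) = T (x m)}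
  add_mem' hx hy m := by simp [hx m, hy m]
  zero_mem' m := by simp
  smul_mem' c x hx m := by simp [hx m]

namespace boundedTrajectories

theorem mem_iff {T : X →L[𝕜] X} {x : ℤ →ᵇ X} :
    x ∈ boundedTrajectories T ↔ ∀ m, x (m + 1) = T (x m) :=
  Iff.rfl

theorem isClosed (T : X →L[𝕜] X) : IsClosed (boundedTrajectories T : Set (ℤ →ᵇ X)) := by
  refine (Set.ext fun x ↦ by simp [mem_iff] :
    (boundedTrajectories T : Set (ℤ →ᵇ X)) = ⋂ m, {x | x (m + 1) = T (x m)}) ▸ ?_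
  exact isClosed_iInter fun m ↦ isClosed_eq (continuous_eval_const (m + 1))
    (T.continuous.comp (continuous_eval_const m))

instance [CompleteSpace X] (T : X →L[𝕜] X) : CompleteSpace (boundedTrajectories T) :=
  (isClosed T).completeSpace_coe

/-- Time translation `x ↦ x (· + k)` of trajectories, as an action of `ℤ`. -/
noncomputable def shift (T : X →L[𝕜] X) :
    Multiplicative ℤ →* (boundedTrajectories T →L[𝕜] boundedTrajectories T) where
  toFun k := (BoundedContinuousFunction.compContinuousCLM X 𝕜
      ⟨(· + k.toAdd), continuous_of_discreteTopology⟩).restrict fun x hx m ↦ by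
    simpa [add_right_comm] using hx (m + k.toAdd)
  map_one' := by ext; simp
  map_mul' k l := by
    ext x m
    exact congrArg (x : ℤ →ᵇ X) (add_assoc m k.toAdd l.toAdd).symm

@[simp]
theorem shift_apply (T : X →L[𝕜] X) (k : Multiplicative ℤ) (x : boundedTrajectories T) (m : ℤ) :
    (shift T k x : ℤ →ᵇ X) m = (x : ℤ →ᵇ X) (m + k.toAdd) :=
  rfl

theorem norm_shift_le (T : X →L[𝕜] X) (k : Multiplicative ℤ) : ‖shift T k‖ ≤ 1 :=
  ContinuousLinearMap.opNorm_le_bound _ zero_le_one fun x ↦ by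
    rw [one_mul]
    exact BoundedContinuousFunction.norm_compContinuous_le (x : ℤ →ᵇ X) _

/-- The operator induced on the trajectories of `T` by a symmetry `S` of the system. -/
noncomputable def map {S T : X →L[𝕜] X} (h : Commute S T) :
    boundedTrajectories T →L[𝕜] boundedTrajectories T :=
  (S.compLeftContinuousBounded ℤ).restrict fun x hx m ↦ by
    simpa [hx m] using DFunLike.congr_fun h.eq (x m)

@[simp]
theorem map_apply {S T : X →L[𝕜] X} (h : Commute S T) (x : boundedTrajectories T) (m : ℤ) :
    (map h x : ℤ →ᵇ X) m = S ((x : ℤ →ᵇ X) m) :=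
  rfl

theorem spectrum_shift_ofAdd_one_subset (T : X →L[𝕜] X) :
    spectrum 𝕜 (shift T (.ofAdd 1)) ⊆ spectrum 𝕜 T := by
  refine Set.compl_subset_compl.1 fun r hr ↦ ?_
  obtain ⟨u, hu⟩ : IsUnit (algebraMap 𝕜 (X →L[𝕜] X) r - T) := not_not.1 hr
  have hcomm : Commute (u : X →L[𝕜] X) T :=
    hu ▸ Commute.sub_left (Algebra.commutes r T) (.refl T)
  have hmap : r • 1 - shift T (.ofAdd 1) = map hcomm := by
    ext x m
    simp [hu, mem_iff.1 x.2 m, Algebra.algebraMap_eq_smul_one]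
  have hunit : IsUnit (map hcomm) := by
    refine ⟨⟨_, map hcomm.units_inv_left, ?_, ?_⟩, rfl⟩
    · ext x m
      exact DFunLike.congr_fun u.mul_inv ((x : ℤ →ᵇ X) m)
    · ext x m
      exact DFunLike.congr_fun u.inv_mul ((x : ℤ →ᵇ X) m)
  rw [Set.mem_compl_iff, spectrum.notMem_iff, Algebra.algebraMap_eq_smul_one, hmap]
  exact hunit

theorem shift_ofAdd_one_eq_one {X : Type*} [NormedAddCommGroup X] [NormedSpace ℂ X]
    [CompleteSpace X] {T : X →L[ℂ] X} (hspec : spectrum ℂ T ∩ {r | ‖r‖ = 1} ⊆ {1}) :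
    shift T (.ofAdd 1) = 1 :=
  map_ofAdd_one_eq_one_of_norm_le (A := boundedTrajectories T →L[ℂ] boundedTrajectories T)
    (norm_shift_le T)
    ((Set.inter_subset_inter_left _ (spectrum_shift_ofAdd_one_subset T)).trans hspec)

end boundedTrajectories

theorem apply_eq_self_of_bounded_trajectory {X : Type*} [NormedAddCommGroup X] [NormedSpace ℂ X]
    [CompleteSpace X] {T : X →L[ℂ] X} (hspec : spectrum ℂ T ∩ {r | ‖r‖ = 1} ⊆ {1})
    {x : ℤ → X} {C : ℝ} (hx : ∀ m, ‖x m‖ ≤ C) (hT : ∀ m, x (m + 1) = T (x m)) (m : ℤ) :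
    T (x m) = x m := by
  let y : boundedTrajectories T :=
    ⟨BoundedContinuousFunction.ofNormedAddCommGroupDiscrete x C hx, hT⟩
  have hy : boundedTrajectories.shift T (.ofAdd 1) y = y := by
    rw [boundedTrajectories.shift_ofAdd_one_eq_one hspec]
    rfl
  rw [← hT]
  exact congrArg (fun z : boundedTrajectories T ↦ (z : ℤ →ᵇ X) m) hy

end BoundedTrajectories

section Dual

theorem exists_strongDual_tendsto_of_norm_le {𝕜 E ι : Type*} [NontriviallyNormedField 𝕜]
    [ProperSpace 𝕜] [SeminormedAddCommGroup E] [NormedSpace 𝕜 E] (U : Ultrafilter ι)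
    {f : ι → StrongDual 𝕜 E} {C : ℝ} (hf : ∀ i, ‖f i‖ ≤ C) :
    ∃ φ : StrongDual 𝕜 E, ‖φ‖ ≤ C ∧ ∀ x, Tendsto (fun i ↦ f i x) U (𝓝 (φ x)) := by
  obtain ⟨φ, hφ, hlim⟩ := (WeakDual.isCompact_closedBall (0 : StrongDual 𝕜 E) C).ultrafilter_le_nhds
    (U.map fun i ↦ StrongDual.toWeakDual (f i))
    (tendsto_principal.2 (.of_forall fun i ↦ by simpa using hf i))
  refine ⟨WeakDual.toStrongDual φ, by simpa using hφ, fun x ↦ ?_⟩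
  exact ((WeakDual.eval_continuous x).tendsto φ).comp hlim

variable {𝕜 A : Type*} [NontriviallyNormedField 𝕜] [NormedRing A] [NormedAlgebra 𝕜 A]

/-- The left action `(a • φ) x = φ (x * a)` of a normed algebra on its dual, as a representation
by bounded operators. -/
noncomputable def dualAction : A →ₐ[𝕜] StrongDual 𝕜 A →L[𝕜] StrongDual 𝕜 A :=
  .ofLinearMap
    ((ContinuousLinearMap.compL 𝕜 A A 𝕜).flip ∘L (ContinuousLinearMap.mul 𝕜 A).flip).toLinearMap
    (by ext; simp) (by intros; ext; simp [mul_assoc])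

@[simp]
theorem dualAction_apply (a : A) (φ : StrongDual 𝕜 A) (x : A) :
    dualAction a φ x = φ (x * a) :=
  rfl

end Dual

section KatznelsonTzafriri

theorem exists_bounded_trajectory_tendsto {𝕜 A : Type*} [NontriviallyNormedField 𝕜]
    [ProperSpace 𝕜] [NormedRing A] [NormedAlgebra 𝕜 A] {a : A} {C : ℝ}
    (ha : ∀ n : ℕ, ‖a ^ n‖ ≤ C) {U : Ultrafilter ℕ} (hU : (U : Filter ℕ) ≤ atTop)
    {f : ℕ → StrongDual 𝕜 A} (hf : ∀ n, ‖f n‖ ≤ 1) :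
    ∃ φ : ℤ → StrongDual 𝕜 A, (∀ m, ‖φ m‖ ≤ C) ∧ (∀ m, φ (m + 1) = dualAction a (φ m)) ∧
      ∀ (m : ℕ) (x : A), Tendsto (fun n ↦ f n (x * a ^ (n + m))) U (𝓝 (φ m x)) := by
  -- The truncation in `toNat` disappears in the limit: `n + m` is eventually nonnegative.
  have hbdd (m : ℤ) (n : ℕ) : ‖dualAction (𝕜 := 𝕜) (a ^ (n + m).toNat) (f n)‖ ≤ C :=
    ContinuousLinearMap.opNorm_le_bound _ ((norm_nonneg _).trans (ha 0)) fun x ↦ by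
      calc ‖f n (x * a ^ (n + m).toNat)‖ ≤ 1 * (‖x‖ * ‖a ^ (n + m).toNat‖) :=
            (f n).le_of_opNorm_le_of_le (hf n) (norm_mul_le _ _)
        _ ≤ C * ‖x‖ := by
            rw [one_mul, mul_comm]
            gcongr
            exact ha _
  choose φ hφ hlim using fun m ↦ exists_strongDual_tendsto_of_norm_le U (hbdd m)
  refine ⟨φ, hφ, fun m ↦ ?_, fun m ↦ by exact_mod_cast hlim m⟩
  ext x
  refine tendsto_nhds_unique (hlim (m + 1) x) ((hlim m (x * a)).congr' ?_)
  filter_upwards [hU (eventually_ge_atTop (-m).toNat)] with n hn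
  have hsucc : (n + (m + 1)).toNat = (n + m).toNat + 1 := by omega
  rw [dualAction_apply, dualAction_apply, hsucc, pow_succ', mul_assoc]

theorem tendsto_norm_pow_succ_sub_pow {A : Type*} [NormedRing A] [NormedAlgebra ℂ A] {a : A}
    {C : ℝ} (ha : ∀ n : ℕ, ‖a ^ n‖ ≤ C) (hspec : spectrum ℂ a ∩ {r | ‖r‖ = 1} ⊆ {1}) :
    Tendsto (fun n : ℕ ↦ ‖a ^ (n + 1) - a ^ n‖) atTop (𝓝 0) := by
  refine (tendsto_iff_ultrafilter _ _ _).2 fun U hU ↦ ?_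
  choose f hf hnorming using fun n : ℕ ↦ exists_dual_vector'' ℂ (a ^ (n + 1) - a ^ n)
  obtain ⟨φ, hφ, hstep, hlim⟩ := exists_bounded_trajectory_tendsto ha hU hf
  have hspec_dual : spectrum ℂ (dualAction (𝕜 := ℂ) a) ∩ {r | ‖r‖ = 1} ⊆ {1} :=
    (Set.inter_subset_inter_left _ (AlgHom.spectrum_apply_subset dualAction a)).trans hspec
  have hconst : φ 1 = φ 0 := by
    rw [← zero_add 1, hstep, apply_eq_self_of_bounded_trajectory hspec_dual hφ hstep]
  have hdiff := ((hlim 1 1).sub (hlim 0 1)).norm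
  simpa [← map_sub, hnorming, hconst] using hdiff

theorem katznelson_tzafriri_extended_general {A : Type*} [NormedRing A] [NormedAlgebra ℂ A]
    {a : A} (hpb : ∃ C : ℝ, ∀ n : ℕ, 1 ≤ n → ‖a ^ n‖ ≤ C) {ϑ : ℂ} (hϑ : ‖ϑ‖ = 1)
    (hspec : spectrum ℂ a ∩ {r | ‖r‖ = 1} ⊆ {ϑ}) :
    Tendsto (fun n : ℕ ↦ ‖a ^ (n + 1) - ϑ • a ^ n‖) atTop (𝓝 0) := by
  obtain ⟨C, hC⟩ := hpb
  have hϑ0 : ϑ ≠ 0 := norm_pos_iff.1 (hϑ ▸ one_pos)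
  have hpow (n : ℕ) : ‖(ϑ⁻¹ • a) ^ n‖ ≤ max ‖(1 : A)‖ C := by
    rw [smul_pow, norm_smul, norm_pow, norm_inv, hϑ, inv_one, one_pow, one_mul]
    rcases n.eq_zero_or_pos with rfl | hn
    · simp
    · exact le_max_of_le_right (hC n hn)
  have hspec_rot : spectrum ℂ (ϑ⁻¹ • a) ∩ {r | ‖r‖ = 1} ⊆ {1} := by
    rintro r ⟨hr, hr1 : ‖r‖ = 1⟩
    have hmem : ϑ * r ∈ spectrum ℂ a := by
      simpa [smul_inv_smul₀ hϑ0] using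
        (spectrum.smul_mem_smul_iff (r := Units.mk0 ϑ hϑ0)).2 hr
    have : ϑ * r = ϑ := hspec ⟨hmem, by simp [hϑ, hr1]⟩
    exact (mul_eq_left₀ hϑ0).1 this
  refine (tendsto_norm_pow_succ_sub_pow hpow hspec_rot).congr fun n ↦ ?_
  have hrot : (ϑ⁻¹ • a) ^ (n + 1) - (ϑ⁻¹ • a) ^ n
      = ϑ⁻¹ ^ (n + 1) • (a ^ (n + 1) - ϑ • a ^ n) := by
    rw [smul_pow, smul_pow, smul_sub, smul_smul, pow_succ ϑ⁻¹ n, inv_mul_cancel_right₀ hϑ0]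
  rw [hrot, norm_smul, norm_pow, norm_inv, hϑ, inv_one, one_pow, one_mul]

end KatznelsonTzafriri

/-- **Theorem 4, extended Katznelson–Tzafriri theorem.** If `T` is a power-bounded
operator on a complex Banach space `X` and `σ(T) ∩ ∂𝔻 ⊆ {ϑ}` with `|ϑ| = 1`, then
`‖T^{n+1} - ϑ T^n‖ → 0`. -/
theorem katznelson_tzafriri_extended
    (X : Type*) [NormedAddCommGroup X] [NormedSpace ℂ X] [CompleteSpace X]
    (T : X →L[ℂ] X) (hpb : ∃ C : ℝ, ∀ n : ℕ, 1 ≤ n → ‖T ^ n‖ ≤ C)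
    (ϑ : ℂ) (hϑ : ‖ϑ‖ = 1)
    (hspec : spectrum ℂ T ∩ {lam : ℂ | ‖lam‖ = 1} ⊆ {ϑ}) :
    Tendsto (fun n : ℕ => ‖T ^ (n + 1) - ϑ • T ^ n‖) atTop (𝓝 (0 : ℝ)) :=
  katznelson_tzafriri_extended_general hpb hϑ hspec
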